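/- (Self-adaptive ORPO odds-ratio term is balanced.) Let β > 0 and let P_w, P_l be real numbers with 0 < P_w < 1 and 0 < P_l < 1. Set the stop-gradient coefficient β_w = β·(P_w·(1 − P_w))/(P_l·(1 − P_l)), treated as a constant. Let d_w be the derivative at P_w of P ↦ −log σ(β_w·log(P/(1 − P)) − β·log(P_l/(1 − P_l))), and let d_l be the derivative at P_l of P ↦ −log σ(β_w·log(P_w/(1 − P_w)) − β·log(P/(1 − P))). Then |d_w| = |d_l|. -/

import Mathlib

/-!
The derivative of `t ↦ -log σ(t)` is `-(e⁻ᵗ / (1 + e⁻ᵗ))`, and the derivative of the log-odds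
`log (P / (1 - P))` is `1 / (P (1 - P))`. Both one-variable functions are evaluated at the same
argument `t`, so the chain rule gives `d_w = s β_w / (Pw (1 - Pw))` and `d_l = -s β / (Pl (1 - Pl))`
with a common factor `s`. The choice of `β_w` cancels `Pw (1 - Pw)`, hence `d_w = -d_l`.
-/

/-- The logistic sigmoid σ(t) = 1/(1 + exp(−t)). -/
noncomputable def sigmoid (t : ℝ) : ℝ := 1 / (1 + Real.exp (-t))

lemma hasDerivAt_neg_log_sigmoid (t : ℝ) :
    HasDerivAt (fun t => -Real.log (sigmoid t)) (-(Real.exp (-t) / (1 + Real.exp (-t)))) t := by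
  have hfun : (fun t => -Real.log (sigmoid t)) = fun t => Real.log (1 + Real.exp (-t)) := by
    funext x
    simp [sigmoid]
  have hpos : 1 + Real.exp (-t) ≠ 0 := by positivity
  rw [hfun]
  have h := (((hasDerivAt_neg t).exp).const_add 1).log hpos
  convert h using 1
  ring

lemma hasDerivAt_log_odds {P : ℝ} (h0 : 0 < P) (h1 : P < 1) :
    HasDerivAt (fun P => Real.log (P / (1 - P))) (1 / (P * (1 - P))) P := by
  have h2 : 1 - P ≠ 0 := by linarith
  have h := ((hasDerivAt_id' P).fun_div ((hasDerivAt_id' P).const_sub 1) h2).log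
    (div_ne_zero h0.ne' h2)
  convert h using 1
  field_simp
  ring

/-- Self-adaptive ORPO odds-ratio term is balanced: with the
stop-gradient coefficient `β_w = β·(P_w·(1−P_w))/(P_l·(1−P_l))` treated as a
constant, the ORPO odds-ratio contrastive term has `|d_w| = |d_l|`. -/
theorem adaptive_orpo_balanced (β Pw Pl βw : ℝ) (hβ : 0 < β)
    (hPw : 0 < Pw) (hPw1 : Pw < 1) (hPl : 0 < Pl) (hPl1 : Pl < 1)
    (hβw : βw = β * (Pw * (1 - Pw)) / (Pl * (1 - Pl))) :
    |deriv (fun P : ℝ =>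
        -Real.log (sigmoid (βw * Real.log (P / (1 - P)) -
          β * Real.log (Pl / (1 - Pl))))) Pw| =
    |deriv (fun P : ℝ =>
        -Real.log (sigmoid (βw * Real.log (Pw / (1 - Pw)) -
          β * Real.log (P / (1 - P))))) Pl| := by
  have hw := (hasDerivAt_neg_log_sigmoid _).comp Pw
    (((hasDerivAt_log_odds hPw hPw1).const_mul βw).sub_const (β * Real.log (Pl / (1 - Pl))))
  have hl := (hasDerivAt_neg_log_sigmoid _).comp Pl
    (((hasDerivAt_log_odds hPl hPl1).const_mul β).const_sub (βw * Real.log (Pw / (1 - Pw))))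
  have hcancel : βw * (1 / (Pw * (1 - Pw))) = β * (1 / (Pl * (1 - Pl))) := by
    have h1 : 1 - Pw ≠ 0 := by linarith
    have h2 : 1 - Pl ≠ 0 := by linarith
    rw [hβw]
    field_simp
  simp only [Function.comp_def] at hw hl
  rw [hw.deriv, hl.deriv, hcancel, mul_neg, abs_neg]
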